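/- arXiv:1905.01853 — 2 statements merged into one kernel-verified Lean document; each statement's English description precedes it below -/
import Mathlib

section
/- Let K be a field of characteristic 0, let ℓ ≥ 1, and let g be a Lie algebra over K that is generated by elements h_1,…,h_ℓ, x_1,…,x_ℓ, y_1,…,y_ℓ satisfying, for an integer matrix C = (C(j,i)) of size ℓ×ℓ, the relations [h_i,h_j] = 0, [h_i,x_j] = C(j,i)·x_j, [h_i,y_j] = −C(j,i)·y_j, and [x_i,y_j] = δ_{ij}·h_i for all 1 ≤ i,j ≤ ℓ. Let c_1,…,c_ℓ ∈ K and set h = c_1 h_1 + ⋯ + c_ℓ h_ℓ, and for 1 ≤ j ≤ ℓ set α_j(h) = Σ_{i=1}^ℓ c_i·C(j,i) ∈ K. Assume that the 2ℓ scalars α_1(h), …, α_ℓ(h), −α_1(h), …, −α_ℓ(h) are pairwise distinct. Let u = Σ_{j=1}^ℓ a_j x_j + Σ_{j=1}^ℓ b_j y_j with all a_j, b_j ∈ K nonzero. Then the Lie subalgebra of g generated by {h, u} is all of g. -/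
/-!
The operator `ad h`, with `h = ∑ cᵢ hᵢ`, preserves the subalgebra `S` generated by `{h, u}`, and
`u` is a sum of eigenvectors `a_j x_j`, `b_j y_j` of `ad h` for the pairwise distinct eigenvalues
`α_j`, `-α_j`. A subspace stable under an operator contains every component of such a sum
(`mem_of_sum_eigenvectors_mem`), so `S` contains all `x_j` and `y_j`, the coefficients being
nonzero. Since `h_i = [x_i, y_i]`, it contains the whole generating set.
-/

/-- Induction on the number of summands: applying `T - μ j` to the sum removes the `j`-th summand
and rescales each of the others by the nonzero scalar `μ i - μ j`. -/
theorem mem_of_sum_eigenvectors_mem {K V ι : Type*} [Field K] [AddCommGroup V] [Module K V]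
    (T : V →ₗ[K] V) (N : Submodule K V) (hN : ∀ v ∈ N, T v ∈ N)
    (μ : ι → K) (hμ : Function.Injective μ) (s : Finset ι) :
    ∀ v : ι → V, (∀ i, T (v i) = μ i • v i) → ∑ i ∈ s, v i ∈ N → ∀ i ∈ s, v i ∈ N := by
  classical
  induction s using Finset.induction_on with
  | empty => simp
  | insert j s hj ih =>
    intro v hv hsum
    have key : ∀ i ∈ s, v i ∈ N := by
      intro i hi
      have h1 : ∑ i ∈ s, (μ i - μ j) • v i ∈ N := by
        have h2 := N.sub_mem (hN _ hsum) (N.smul_mem (μ j) hsum)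
        rw [Finset.sum_insert hj, map_add, map_sum, smul_add, hv j, add_sub_add_left_eq_sub,
          Finset.smul_sum, ← Finset.sum_sub_distrib] at h2
        simpa only [sub_smul, hv] using h2
      have h3 := ih (fun i => (μ i - μ j) • v i)
        (fun i => by rw [map_smul, hv, smul_comm]) h1 i hi
      have hne : μ i - μ j ≠ 0 :=
        sub_ne_zero.2 fun e => hj (hμ e ▸ hi)
      exact (N.smul_mem_iff hne).1 h3
    intro i hi
    rcases Finset.mem_insert.1 hi with rfl | hi
    · rw [Finset.sum_insert hj] at hsum
      exact (N.add_mem_iff_left (N.sum_mem key)).1 hsum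
    · exact key i hi

/-- If `h₁,…,h_ℓ, x₁,…,x_ℓ, y₁,…,y_ℓ` form a canonical generating set of a
Lie algebra `g` over a field `K` of characteristic zero (with integer Cartan-like matrix `C`),
`h = ∑ cᵢ hᵢ`, `α_j(h) = ∑ᵢ cᵢ C(j,i)`, the `2ℓ` scalars `±α_j(h)` are pairwise distinct, and
`u = ∑ a_j x_j + ∑ b_j y_j` with all `a_j, b_j` nonzero, then `{h, u}` generates `g`. -/
theorem stmt0 (K : Type*) [Field K] [CharZero K]
    (L : Type*) [LieRing L] [LieAlgebra K L]
    (ℓ : ℕ) (hℓ : 1 ≤ ℓ)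
    (h x y : Fin ℓ → L) (C : Fin ℓ → Fin ℓ → ℤ)
    (hgen : LieSubalgebra.lieSpan K L
      (Set.range h ∪ Set.range x ∪ Set.range y) = ⊤)
    (hhh : ∀ i j, ⁅h i, h j⁆ = 0)
    (hhx : ∀ i j, ⁅h i, x j⁆ = (C j i : K) • x j)
    (hhy : ∀ i j, ⁅h i, y j⁆ = -(C j i : K) • y j)
    (hxy : ∀ i j, ⁅x i, y j⁆ = if i = j then h i else 0)
    (c : Fin ℓ → K)
    (α : Fin ℓ → K) (hα : ∀ j, α j = ∑ i, c i * (C j i : K))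
    (hdist : Function.Injective fun p : Bool × Fin ℓ => if p.1 then α p.2 else -α p.2)
    (a b : Fin ℓ → K) (ha : ∀ j, a j ≠ 0) (hb : ∀ j, b j ≠ 0) :
    LieSubalgebra.lieSpan K L
      {∑ i, c i • h i, (∑ j, a j • x j) + ∑ j, b j • y j} = ⊤ := by
  set H : L := ∑ i, c i • h i with hH
  set u : L := (∑ j, a j • x j) + ∑ j, b j • y j with hu
  set S := LieSubalgebra.lieSpan K L {H, u} with hS
  have hHS : H ∈ S := LieSubalgebra.subset_lieSpan (by simp)
  have huS : u ∈ S := LieSubalgebra.subset_lieSpan (by simp)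
  have hHx : ∀ j, ⁅H, x j⁆ = α j • x j := fun j => by
    simp [hH, hα, sum_lie, hhx, Finset.sum_smul, smul_smul]
  have hHy : ∀ j, ⁅H, y j⁆ = -α j • y j := fun j => by
    simp [hH, hα, sum_lie, hhy, Finset.sum_smul, smul_smul]
  have key := mem_of_sum_eigenvectors_mem (LieAlgebra.ad K L H : L →ₗ[K] L) S.toSubmodule
    (fun v hv => S.lie_mem hHS hv) _ hdist Finset.univ
    (fun p => if p.1 then a p.2 • x p.2 else b p.2 • y p.2)
    (by
      rintro ⟨_ | _, j⟩
      · simp [hHy, smul_comm (b j)]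
      · simp [hHx, smul_comm (a j)])
    (by
      rw [Fintype.sum_prod_type, Fintype.sum_bool]
      simpa using huS)
  have hxS : ∀ j, x j ∈ S := fun j =>
    (S.toSubmodule.smul_mem_iff (ha j)).1 (by simpa using key (true, j) (Finset.mem_univ _))
  have hyS : ∀ j, y j ∈ S := fun j =>
    (S.toSubmodule.smul_mem_iff (hb j)).1 (by simpa using key (false, j) (Finset.mem_univ _))
  have hhS : ∀ j, h j ∈ S := fun j => by
    have := S.lie_mem (hxS j) (hyS j)
    rwa [hxy, if_pos rfl] at this
  rw [eq_top_iff, ← hgen, LieSubalgebra.lieSpan_le]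
  rintro _ ((⟨j, rfl⟩ | ⟨j, rfl⟩) | ⟨j, rfl⟩)
  exacts [hhS j, hxS j, hyS j]
end

section
/- Fix an odd integer n = 2m+1 ≥ 3. There exists t₀ ∈ ℝ such that for every t ∈ ℤ divisible by (n−1)! and every s ∈ ℤ with |t| > t₀ and |s| > 2, the matrices a(t) and b(s) have integer entries and determinant 1, and the subgroup of SL(n,ℤ) they generate has infinite index in SL(n,ℤ) (hence is a thin subgroup, being also Zariski-dense). -/
/-!
The subgroup generated by `a(t)` and `b(s)` is contained in a free subgroup of `SL(n, ℤ)`, and such a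
subgroup has infinite index as soon as `n ≥ 3`.

*Freeness.* The powers of `a(t)` and `b(s)` are `a(kt)` and `b(ks)`. They play ping-pong on two
disjoint sets of vectors of `ℂⁿ`: those whose first coordinate is nonzero and at least twice as large
as every other one (`firstDom`), and those whose last coordinate is nonzero and at least as large as
every other one (`lastDom`). If the last coordinate of `v` dominates, then the entry `T^(n-1)/(n-1)!`
in the top right corner of `a(T)` makes the first coordinate of `a(T) v` dominate once `T` is large,
all other entries being at most `|T|^(n-2)` (`aMat_mulVec_mem`). If the first coordinate of `v`
dominates, then `b(S)` adds `S v₁` to the last coordinate, which therefore dominates when `|S| ≥ 2`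
(`bMat_mulVec_mem`). Hence the free product of two infinite cyclic groups embeds (`lift_injective`).

*Infinite index.* A subgroup of finite index contains nontrivial powers of the commuting elementary
matrices `1 + E₁₂` and `1 + E₁₃`. In a free group, two commuting elements lie in a common cyclic
subgroup, because by Nielsen–Schreier they generate a commutative free group; so they satisfy a
nontrivial relation `x ^ p = y ^ q` (`exists_zpow_eq_zpow_of_commute`). The powers of `1 + E₁₂` and
`1 + E₁₃` satisfy no such relation (`infinite_quotient_of_le_free`).
-/


open Matrix

/-- The `n × n` complex matrix `a(t) = exp(t x)` with `x = ∑_{i=1}^{n-1} E_{i,i+1}`: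
its `(i,j)` entry is `t^{j-i}/(j-i)!` for `i ≤ j` and `0` otherwise. -/
noncomputable def aMat (n : ℕ) (t : ℂ) : Matrix (Fin n) (Fin n) ℂ :=
  Matrix.of fun i j =>
    if (i : ℕ) ≤ (j : ℕ) then t ^ ((j : ℕ) - (i : ℕ)) / (((j : ℕ) - (i : ℕ)).factorial : ℂ)
    else 0

/-- The `n × n` complex matrix `b(s) = 1ₙ + s E_{n,1}` (in 0-based indexing the extra
entry `s` is in position `(n-1, 0)`). -/
def bMat (n : ℕ) (s : ℂ) : Matrix (Fin n) (Fin n) ℂ :=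
  Matrix.of fun i j =>
    (if i = j then 1 else 0) + (if (i : ℕ) = n - 1 ∧ (j : ℕ) = 0 then s else 0)

/-! ### Commuting elements in free groups, and the index of free subgroups -/

theorem FreeGroupBasis.subsingleton_of_comm {ι G : Type*} [Group G] (b : FreeGroupBasis ι G)
    (h : ∀ x y : G, x * y = y * x) : Subsingleton ι := by
  classical
  refine ⟨fun i j => ?_⟩
  by_contra hij
  let f : G →* Equiv.Perm (Fin 3) :=
    b.lift fun k => if k = i then Equiv.swap 0 1 else Equiv.swap 1 2
  have h1 : f (b i) = Equiv.swap 0 1 := by simp [f]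
  have h2 : f (b j) = Equiv.swap 1 2 := by simp [f, Ne.symm hij]
  have h3 := congrArg f (h (b i) (b j))
  -- the transpositions `(0 1)` and `(1 2)` do not commute
  rw [map_mul, map_mul, h1, h2] at h3
  revert h3
  decide

theorem isCyclic_of_isFreeGroup_of_comm {G : Type*} [Group G] [IsFreeGroup G]
    (h : ∀ x y : G, x * y = y * x) : IsCyclic G := by
  have b := IsFreeGroup.basis G
  have := b.subsingleton_of_comm h
  have e := (IsFreeGroup.basis G).repr
  rcases isEmpty_or_nonempty (IsFreeGroup.Generators G) with hE | ⟨⟨i⟩⟩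
  · have : Subsingleton G := e.toEquiv.subsingleton
    infer_instance
  · have : Unique (IsFreeGroup.Generators G) := uniqueOfSubsingleton i
    exact isCyclic_of_surjective e.symm e.symm.surjective

theorem exists_zpow_eq_zpow_of_commute {G : Type*} [Group G] [IsFreeGroup G] {x y : G}
    (h : Commute x y) : ∃ p q : ℤ, (p ≠ 0 ∨ q ≠ 0) ∧ x ^ p = y ^ q := by
  have hc : ∀ u v : Subgroup.closure {x, y}, u * v = v * u := by
    have := Subgroup.isMulCommutative_closure (k := {x, y}) (by
      rintro a (rfl | rfl) b (rfl | rfl)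
      exacts [rfl, h, h.symm, rfl])
    exact fun u v => this.is_comm.comm u v
  -- by Nielsen–Schreier the subgroup generated by `x` and `y` is free
  have := isCyclic_of_isFreeGroup_of_comm hc
  obtain ⟨⟨g, _⟩, hg⟩ := this.exists_generator
  obtain ⟨p, hp⟩ := hg ⟨x, Subgroup.subset_closure (by simp)⟩
  obtain ⟨q, hq⟩ := hg ⟨y, Subgroup.subset_closure (by simp)⟩
  have hp : g ^ p = x := by simpa using congrArg Subtype.val hp
  have hq : g ^ q = y := by simpa using congrArg Subtype.val hq
  -- `x ^ q = y ^ p` is a nontrivial relation unless `x = y = 1`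
  by_cases h0 : q = 0 ∧ p = 0
  · refine ⟨1, 1, by simp, ?_⟩
    rw [← hp, ← hq, h0.1, h0.2]
  · exact ⟨q, p, by tauto, by rw [← hp, ← hq, ← _root_.zpow_mul, ← _root_.zpow_mul, mul_comm]⟩

/-- For `n ≥ 3` a free subgroup of `SL(n, ℤ)` has infinite index, and so does every subgroup of it:
it cannot contain powers of both of the commuting matrices `1 + E₁₂` and `1 + E₁₃`. -/
theorem infinite_quotient_of_le_free {n : ℕ} (hn : 3 ≤ n)
    {H K : Subgroup (SpecialLinearGroup (Fin n) ℤ)} (hHK : H ≤ K) [IsFreeGroup K] :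
    Infinite (SpecialLinearGroup (Fin n) ℤ ⧸ H) := by
  rw [← not_finite_iff_infinite]
  intro hfin
  have hH : H.index ≠ 0 := Subgroup.index_ne_zero_of_finite
  have h01 : (⟨0, by omega⟩ : Fin n) ≠ ⟨1, by omega⟩ := by simp
  have h02 : (⟨0, by omega⟩ : Fin n) ≠ ⟨2, by omega⟩ := by simp
  set u := SpecialLinearGroup.transvection h01 (1 : ℤ) with hu
  set v := SpecialLinearGroup.transvection h02 (1 : ℤ) with hv
  have hzpow {i j : Fin n} (hij : i ≠ j) (k : ℤ) :
      SpecialLinearGroup.transvection hij (1 : ℤ) ^ k =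
        SpecialLinearGroup.transvection hij k := by
    induction k with
    | zero => simp
    | succ k ih => rw [_root_.zpow_add_one, ih, ← SpecialLinearGroup.transvection_add]
    | pred k ih =>
      rw [_root_.zpow_sub_one, ih, SpecialLinearGroup.transvection_inv,
        ← SpecialLinearGroup.transvection_add, sub_eq_add_neg]
  obtain ⟨k, hk, -, hku⟩ := Subgroup.exists_pow_mem_of_index_ne_zero hH u
  obtain ⟨l, hl, -, hlv⟩ := Subgroup.exists_pow_mem_of_index_ne_zero hH v
  have huv : Commute u v := by
    ext i j
    simp [hu, hv, SpecialLinearGroup.transvection_coe, mul_add, add_mul,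
      single_mul_single_of_ne, add_assoc]
    exact add_comm _ _
  obtain ⟨p, q, hpq, h⟩ := exists_zpow_eq_zpow_of_commute
    (x := (⟨u ^ k, hHK hku⟩ : K)) (y := ⟨v ^ l, hHK hlv⟩)
    (Subtype.ext (huv.pow_pow k l))
  have h : (u ^ k) ^ p = (v ^ l) ^ q := by simpa using congrArg Subtype.val h
  rw [← zpow_natCast, ← zpow_natCast, ← _root_.zpow_mul, ← _root_.zpow_mul, hu, hv, hzpow, hzpow] at h
  -- the relation reads `1 + k p E₁₂ = 1 + l q E₁₃`: compare the two entries
  have e1 := congrArg (fun M : SpecialLinearGroup (Fin n) ℤ => M ⟨0, by omega⟩ ⟨1, by omega⟩) h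
  have e2 := congrArg (fun M : SpecialLinearGroup (Fin n) ℤ => M ⟨0, by omega⟩ ⟨2, by omega⟩) h
  simp [SpecialLinearGroup.transvection_coe] at e1 e2
  omega

/-! ### The one-parameter groups `a` and `b` -/

theorem aMat_add (n : ℕ) (x y : ℂ) : aMat n (x + y) = aMat n x * aMat n y := by
  ext i j
  simp only [aMat, mul_apply, of_apply]
  rw [Fin.sum_univ_eq_sum_range (fun k => (if (i : ℕ) ≤ k then
    x ^ (k - (i : ℕ)) / ((k - (i : ℕ)).factorial : ℂ) else 0) *
    (if k ≤ (j : ℕ) then y ^ ((j : ℕ) - k) / (((j : ℕ) - k).factorial : ℂ) else 0)) n]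
  split_ifs with hij
  · obtain ⟨d, hd⟩ := Nat.exists_eq_add_of_le hij
    have hj := j.2
    -- only `k = i + m` with `m ≤ j - i` contribute
    have hsub : (Finset.range (d + 1)).image (fun m => (i : ℕ) + m) ⊆ Finset.range n := by
      intro k hk
      simp only [Finset.mem_image, Finset.mem_range] at hk ⊢
      omega
    rw [← Finset.sum_subset hsub, Finset.sum_image (by intro a _ b _ h; simpa using h),
      hd, Nat.add_sub_cancel_left, add_pow, Finset.sum_div]
    · refine Finset.sum_congr rfl fun m hm => ?_
      have hm : m ≤ d := by simpa [Nat.lt_succ_iff] using hm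
      rw [if_pos (by omega), if_pos (by omega), Nat.add_sub_cancel_left, Nat.add_sub_add_left,
        Nat.cast_choose ℂ hm]
      have := Nat.cast_ne_zero (R := ℂ).2 d.factorial_ne_zero
      field_simp
    · intro k _ hk
      simp only [Finset.mem_image, Finset.mem_range, not_exists, not_and] at hk
      by_cases h1 : (i : ℕ) ≤ k
      · rw [if_neg (c := k ≤ (j : ℕ)), mul_zero]
        intro h2
        exact hk (k - i) (by omega) (by omega)
      · rw [if_neg h1, zero_mul]
  · refine (Finset.sum_eq_zero fun k _ => ?_).symm
    by_cases h1 : (i : ℕ) ≤ k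
    · rw [if_neg (c := k ≤ (j : ℕ)) (by omega), mul_zero]
    · rw [if_neg h1, zero_mul]

theorem det_aMat (n : ℕ) (x : ℂ) : (aMat n x).det = 1 := by
  rw [det_of_isUpperTriangular]
  · simp [aMat]
  · intro i j hij
    have h : ¬ ((i : ℕ) ≤ j) := by simpa using hij
    rw [aMat, of_apply, if_neg h]

theorem aMat_zero (n : ℕ) : aMat n 0 = 1 := by
  ext i j
  rcases lt_trichotomy i j with h | h | h
  · have h' : (i : ℕ) < j := h
    simp [aMat, h.ne, show (j : ℕ) - i ≠ 0 by omega]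
  · simp [aMat, h, one_apply]
  · have h' : ¬ (i : ℕ) ≤ j := not_le.2 h
    rw [aMat, of_apply, if_neg h', one_apply_ne h.ne']

/-- Integrality: the factorials occurring in `a(t)` all divide `(n - 1)!`, hence `t`. -/
theorem exists_int_aMat (n : ℕ) {t : ℤ} (ht : ((n - 1).factorial : ℤ) ∣ t) :
    ∃ A : SpecialLinearGroup (Fin n) ℤ,
      (A : Matrix (Fin n) (Fin n) ℤ).map (Int.cast : ℤ → ℂ) = aMat n (t : ℂ) := by
  let M : Matrix (Fin n) (Fin n) ℤ := Matrix.of fun i j =>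
    if (i : ℕ) ≤ (j : ℕ) then t ^ ((j : ℕ) - (i : ℕ)) / (((j : ℕ) - (i : ℕ)).factorial : ℤ)
    else 0
  have hM : M.map (Int.cast : ℤ → ℂ) = aMat n (t : ℂ) := by
    ext i j
    simp only [M, aMat, map_apply, of_apply]
    split_ifs with hij
    · have hdvd : ((((j : ℕ) - (i : ℕ)).factorial : ℕ) : ℤ) ∣ t ^ ((j : ℕ) - (i : ℕ)) := by
        rcases Nat.eq_zero_or_pos ((j : ℕ) - (i : ℕ)) with h0 | h0
        · simp [h0]
        · refine dvd_trans ?_ (dvd_trans ht (dvd_pow_self t h0.ne'))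
          exact_mod_cast Nat.factorial_dvd_factorial (by omega)
      rw [Int.cast_div hdvd (by exact_mod_cast Nat.factorial_ne_zero _)]
      push_cast
      rfl
    · simp
  refine ⟨⟨M, ?_⟩, hM⟩
  have h := (Int.castRingHom ℂ).map_det M
  rw [RingHom.mapMatrix_apply, Int.coe_castRingHom, hM, det_aMat] at h
  exact Int.cast_injective (α := ℂ) (by simpa using h)

theorem bMat_eq_transvection {n : ℕ} {i j : Fin n} (hi : (i : ℕ) = n - 1) (hj : (j : ℕ) = 0)
    (s : ℂ) : bMat n s = transvection i j s := by
  ext k l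
  simp [bMat, transvection, one_apply, single_apply, Fin.ext_iff, hi, hj, eq_comm]

theorem aMat_zpow {n : ℕ} {t : ℂ} {a : SpecialLinearGroup (Fin n) ℂ} (ha : a.1 = aMat n t)
    (k : ℤ) : (a ^ k).1 = aMat n (k * t) := by
  let φ : Multiplicative ℂ →* SpecialLinearGroup (Fin n) ℂ :=
    { toFun := fun x => ⟨aMat n x.toAdd, det_aMat n _⟩
      map_one' := Subtype.ext (aMat_zero n)
      map_mul' := fun x y => Subtype.ext (aMat_add n x.toAdd y.toAdd) }
  have h : a = φ (Multiplicative.ofAdd t) := Subtype.ext ha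
  rw [h, ← map_zpow, ← ofAdd_zsmul, zsmul_eq_mul]
  rfl

theorem bMat_zpow {n : ℕ} (hn : 3 ≤ n) {s : ℂ} {b : SpecialLinearGroup (Fin n) ℂ}
    (hb : b.1 = bMat n s) (k : ℤ) : (b ^ k).1 = bMat n (k * s) := by
  have hij : (⟨n - 1, by omega⟩ : Fin n) ≠ ⟨0, by omega⟩ := by simp; omega
  let φ : Multiplicative ℂ →* SpecialLinearGroup (Fin n) ℂ :=
    { toFun := fun x => SpecialLinearGroup.transvection hij x.toAdd
      map_one' := SpecialLinearGroup.transvection_coeff_zero hij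
      map_mul' := fun x y => SpecialLinearGroup.transvection_add hij _ _ }
  have h : b = φ (Multiplicative.ofAdd s) :=
    Subtype.ext (hb.trans (bMat_eq_transvection rfl rfl s))
  rw [h, ← map_zpow, ← ofAdd_zsmul, zsmul_eq_mul,
    bMat_eq_transvection (i := ⟨n - 1, by omega⟩) (j := ⟨0, by omega⟩) rfl rfl]
  rfl

/-! ### Ping-pong -/

/-- Vectors of `ℂⁿ` whose last coordinate is nonzero and dominates the others in absolute value. -/
def lastDom (n : ℕ) : Set (Fin n → ℂ) :=
  {v | ∃ l : Fin n, (l : ℕ) = n - 1 ∧ v l ≠ 0 ∧ ∀ i, ‖v i‖ ≤ ‖v l‖}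

/-- Vectors of `ℂⁿ` whose first coordinate is nonzero and at least twice as large in absolute value
as each of the others. The factor `2` makes this set disjoint from `lastDom n`. -/
def firstDom (n : ℕ) : Set (Fin n → ℂ) :=
  {v | ∃ f : Fin n, (f : ℕ) = 0 ∧ v f ≠ 0 ∧ ∀ i ≠ f, 2 * ‖v i‖ ≤ ‖v f‖}

/-- For `T` large the top right entry `T ^ (n - 1) / (n - 1)!` of `a(T)` outweighs all the others,
which are at most `‖T‖ ^ (n - 2)`. -/
theorem aMat_mulVec_mem {n : ℕ} (hn : 3 ≤ n) {T : ℂ} (hT : 3 * n * (n - 1).factorial ≤ ‖T‖)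
    {v : Fin n → ℂ} (hv : v ∈ lastDom n) : aMat n T *ᵥ v ∈ firstDom n := by
  obtain ⟨l, hl, hl0, hle⟩ := hv
  set c := ‖v l‖ with hc
  have hcpos : 0 < c := norm_pos_iff.2 hl0
  have hn' : (3 : ℝ) ≤ n := by exact_mod_cast hn
  have hfac : (1 : ℝ) ≤ (n - 1).factorial := by exact_mod_cast Nat.factorial_pos _
  have hT1 : 1 ≤ ‖T‖ := by nlinarith
  set R := ‖T‖ ^ (n - 2) with hR
  have hRpos : 0 < R := by positivity
  let f : Fin n := ⟨0, by omega⟩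
  have hlf : (l : ℕ) - (f : ℕ) = n - 1 := by simp [f, hl]
  have hent (i j : Fin n) (hij : i ≠ f ∨ j ≠ l) : ‖aMat n T i j‖ ≤ R := by
    have hij' : (i : ℕ) ≠ 0 ∨ (j : ℕ) ≠ n - 1 := by
      simpa [f, Fin.ext_iff, hl] using hij
    simp only [aMat, of_apply]
    split_ifs with h
    · rw [norm_div, norm_pow, Complex.norm_natCast]
      calc ‖T‖ ^ ((j : ℕ) - i) / (((j : ℕ) - i).factorial : ℝ) ≤ ‖T‖ ^ ((j : ℕ) - i) :=
            div_le_self (by positivity) (by exact_mod_cast Nat.factorial_pos _)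
        _ ≤ R := pow_le_pow_right₀ hT1 (by omega)
    · simp [hRpos.le]
  have hterm (i j : Fin n) (hij : i ≠ f ∨ j ≠ l) : ‖aMat n T i j * v j‖ ≤ R * c := by
    rw [norm_mul]
    exact mul_le_mul (hent i j hij) (hle j) (norm_nonneg _) hRpos.le
  have hother (i : Fin n) (hi : i ≠ f) : ‖(aMat n T *ᵥ v) i‖ ≤ n * (R * c) := by
    refine (norm_sum_le_of_le (f := fun j => aMat n T i j * v j) Finset.univ
      (fun j _ => hterm i j (Or.inl hi))).trans_eq ?_
    simp
  have hrest : ‖∑ j ∈ Finset.univ.erase l, aMat n T f j * v j‖ ≤ n * (R * c) := by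
    refine (norm_sum_le_of_le (f := fun j => aMat n T f j * v j) (Finset.univ.erase l)
      (fun j hj => hterm f j (Or.inr (Finset.ne_of_mem_erase hj)))).trans ?_
    rw [Finset.sum_const, nsmul_eq_mul]
    gcongr
    simp
  have hmain : 3 * (n * (R * c)) ≤ ‖aMat n T f l * v l‖ := by
    have h1 : ‖aMat n T f l‖ = ‖T‖ * R / (n - 1).factorial := by
      simp only [aMat, of_apply, hlf]
      rw [if_pos (by simp [f]), norm_div, norm_pow, Complex.norm_natCast, hR, ← pow_succ',
        show n - 2 + 1 = n - 1 by omega]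
    rw [norm_mul, h1, ← hc, div_mul_eq_mul_div, le_div_iff₀ (by positivity)]
    calc 3 * (n * (R * c)) * (n - 1).factorial = (3 * n * (n - 1).factorial) * (R * c) := by ring
      _ ≤ ‖T‖ * (R * c) := by gcongr
      _ = ‖T‖ * R * c := by ring
  have hfirst : 2 * (n * (R * c)) ≤ ‖(aMat n T *ᵥ v) f‖ := by
    have h2 : (aMat n T *ᵥ v) f =
        aMat n T f l * v l + ∑ j ∈ Finset.univ.erase l, aMat n T f j * v j :=
      (Finset.add_sum_erase _ (fun j => aMat n T f j * v j) (Finset.mem_univ l)).symm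
    have h3 := norm_sub_le_norm_add (aMat n T f l * v l)
      (∑ j ∈ Finset.univ.erase l, aMat n T f j * v j)
    rw [h2]
    linarith
  refine ⟨f, rfl, ?_, fun i hi => ?_⟩
  · rw [← norm_pos_iff]
    refine lt_of_lt_of_le ?_ hfirst
    positivity
  · linarith [hother i hi]

theorem bMat_mulVec_mem {n : ℕ} (hn : 3 ≤ n) {S : ℂ} (hS : 2 ≤ ‖S‖)
    {v : Fin n → ℂ} (hv : v ∈ firstDom n) : bMat n S *ᵥ v ∈ lastDom n := by
  obtain ⟨f, hf, hf0, hle⟩ := hv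
  have hfpos : 0 < ‖v f‖ := norm_pos_iff.2 hf0
  let l : Fin n := ⟨n - 1, by omega⟩
  have hlf : l ≠ f := by simp [l, Fin.ext_iff, hf]; omega
  have hb : bMat n S *ᵥ v = v + Pi.single l (S * v f) := by
    rw [bMat_eq_transvection (i := l) (j := f) rfl hf, Matrix.transvection, add_mulVec, one_mulVec,
      single_mulVec]
    rfl
  have h1 : ‖v f‖ ≤ ‖(bMat n S *ᵥ v) l‖ := by
    have h2 := norm_sub_le_norm_add (S * v f) (v l)
    have h3 := hle l hlf
    rw [norm_mul] at h2
    rw [hb, Pi.add_apply, Pi.single_eq_same, add_comm]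
    nlinarith
  refine ⟨l, rfl, norm_pos_iff.1 (hfpos.trans_le h1), fun i => ?_⟩
  by_cases hi : i = l
  · rw [hi]
  · refine le_trans ?_ h1
    rw [hb, Pi.add_apply, Pi.single_eq_of_ne hi, add_zero]
    by_cases hif : i = f
    · rw [hif]
    · linarith [hle i hif, norm_nonneg (v i)]

theorem disjoint_dom {n : ℕ} (hn : 3 ≤ n) : Disjoint (firstDom n) (lastDom n) := by
  rw [Set.disjoint_left]
  rintro v ⟨f, hf, hf0, hf'⟩ ⟨l, hl, hl0, hl'⟩
  have hlf : l ≠ f := by simp [Fin.ext_iff, hf, hl]; omega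
  have := norm_pos_iff.2 hf0
  linarith [hf' l hlf, hl' f]

open scoped Pointwise in
/-- Ping-pong: for `t` large and `2 ≤ |s|`, the group generated by `a(t)` and `b(s)` is the free product
of the two infinite cyclic groups that they generate. -/
theorem lift_injective {n : ℕ} (hn : 3 ≤ n) {t s : ℤ}
    (ht : (3 * n * (n - 1).factorial : ℝ) ≤ |(t : ℝ)|) (hs : 2 ≤ |(s : ℝ)|)
    (g : Fin 2 → SpecialLinearGroup (Fin n) ℂ)
    (h0 : (g 0).1 = aMat n t) (h1 : (g 1).1 = bMat n s) :
    Function.Injective (Monoid.CoprodI.lift (M := fun _ : Fin 2 => FreeGroup Unit)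
      fun i => FreeGroup.lift fun _ => g i) := by
  have key : ∀ (i : Fin 2) (x : FreeGroup Unit), x ≠ 1 →
      ∃ k : ℤ, 1 ≤ ‖(k : ℂ)‖ ∧ FreeGroup.lift (fun _ => g i) x = g i ^ k := by
    intro i x hx
    refine ⟨FreeGroup.freeGroupUnitEquivInt x, ?_, ?_⟩
    · rw [Complex.norm_intCast]
      have : FreeGroup.freeGroupUnitEquivInt x ≠ 0 := by
        intro h
        apply hx
        rw [← FreeGroup.freeGroupUnitEquivInt.symm_apply_apply x, h]
        rfl
      exact_mod_cast Int.one_le_abs this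
    · have hx' : x = FreeGroup.of () ^ FreeGroup.freeGroupUnitEquivInt x :=
        (FreeGroup.freeGroupUnitEquivInt.symm_apply_apply x).symm
      conv_lhs => rw [hx']
      rw [map_zpow, FreeGroup.lift_apply_of]
  refine Monoid.CoprodI.lift_injective_of_ping_pong _ (Or.inr ⟨0, ?_⟩)
    (fun i : Fin 2 => ![firstDom n, lastDom n] i) ?_ ?_ ?_
  · rw [FreeGroup.freeGroupUnitEquivInt.cardinal_eq, Cardinal.mk_denumerable]
    exact Cardinal.natCast_le_aleph0
  · rw [Fin.forall_fin_two]
    constructor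
    · exact ⟨Pi.single ⟨0, by omega⟩ 1, ⟨0, by omega⟩, rfl, by simp,
        fun i hi => by simp [Pi.single_eq_of_ne hi]⟩
    · refine ⟨Pi.single ⟨n - 1, by omega⟩ 1, ⟨n - 1, by omega⟩, rfl, by simp, fun i => ?_⟩
      by_cases hi : i = ⟨n - 1, by omega⟩
      · rw [hi]
      · simp [Pi.single_eq_of_ne hi]
  · intro i j hij
    fin_cases i <;> fin_cases j
    · exact absurd rfl hij
    · exact disjoint_dom hn
    · exact (disjoint_dom hn).symm
    · exact absurd rfl hij
  · intro i j hij x hx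
    obtain ⟨k, hk, hkx⟩ := key i x hx
    rw [hkx]
    rintro _ ⟨v, hv, rfl⟩
    fin_cases i <;> fin_cases j
    · exact absurd rfl hij
    · change (g 0 ^ k).1 *ᵥ v ∈ firstDom n
      rw [aMat_zpow h0]
      refine aMat_mulVec_mem hn ?_ hv
      rw [norm_mul, Complex.norm_intCast t]
      nlinarith [abs_nonneg (t : ℝ)]
    · change (g 1 ^ k).1 *ᵥ v ∈ lastDom n
      rw [bMat_zpow hn h1]
      refine bMat_mulVec_mem hn ?_ hv
      rw [norm_mul, Complex.norm_intCast s]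
      nlinarith [abs_nonneg (s : ℝ)]
    · exact absurd rfl hij

/-- for odd `n = 2m+1 ≥ 3` there exists `t₀ ∈ ℝ` such that for all integers
`t, s` with `(n-1)! ∣ t`, `|t| > t₀` and `|s| > 2`, the matrices `a(t)` and `b(s)` have
integer entries and determinant 1 — i.e. they are (the complexifications of) elements
`A, B` of `SL(n, ℤ)` — and the subgroup of `SL(n, ℤ)` generated by `A` and `B` has
infinite index in `SL(n, ℤ)` (infinitely many left cosets). -/
theorem stmt16 (n : ℕ) (hn : 3 ≤ n) (hodd : Odd n) :
    ∃ t₀ : ℝ, ∀ t s : ℤ, ((n - 1).factorial : ℤ) ∣ t →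
      t₀ < |(t : ℝ)| → 2 < |(s : ℝ)| →
      ∃ A B : Matrix.SpecialLinearGroup (Fin n) ℤ,
        (A : Matrix (Fin n) (Fin n) ℤ).map (Int.cast : ℤ → ℂ) = aMat n (t : ℂ) ∧
        (B : Matrix (Fin n) (Fin n) ℤ).map (Int.cast : ℤ → ℂ) = bMat n (s : ℂ) ∧
        Infinite
          (Matrix.SpecialLinearGroup (Fin n) ℤ ⧸ Subgroup.closure {A, B}) := by
  refine ⟨3 * n * (n - 1).factorial, fun t s hdvd ht hs => ?_⟩
  obtain ⟨A, hA⟩ := exists_int_aMat n hdvd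
  have hlf : (⟨n - 1, by omega⟩ : Fin n) ≠ ⟨0, by omega⟩ := by simp; omega
  let B : SpecialLinearGroup (Fin n) ℤ := SpecialLinearGroup.transvection hlf s
  have hB : (B : Matrix (Fin n) (Fin n) ℤ).map (Int.cast : ℤ → ℂ) = bMat n (s : ℂ) := by
    rw [bMat_eq_transvection (i := ⟨n - 1, by omega⟩) (j := ⟨0, by omega⟩) rfl rfl]
    ext i j
    simp [B, SpecialLinearGroup.transvection_coe, Matrix.transvection, one_apply, single_apply,
      apply_ite (Int.cast : ℤ → ℂ)]
  refine ⟨A, B, hA, hB, ?_⟩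
  let φ : SpecialLinearGroup (Fin n) ℤ →* SpecialLinearGroup (Fin n) ℂ :=
    SpecialLinearGroup.map (Int.castRingHom ℂ)
  let F : Monoid.CoprodI (fun _ : Fin 2 => FreeGroup Unit) →* SpecialLinearGroup (Fin n) ℤ :=
    Monoid.CoprodI.lift fun i => FreeGroup.lift fun _ => ![A, B] i
  have hinj := lift_injective hn ht.le hs.le (fun i => φ (![A, B] i)) hA hB
  -- the free product embeds in `SL(n, ℤ)` because its image in `SL(n, ℂ)` is already faithful
  have hF : Function.Injective F := by
    have hcomp : (Monoid.CoprodI.lift (M := fun _ : Fin 2 => FreeGroup Unit)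
        fun i => FreeGroup.lift fun _ => φ (![A, B] i)) = φ.comp F := by
      ext1 i
      ext1 u
      simp [F]
    rw [hcomp, MonoidHom.coe_comp] at hinj
    exact hinj.of_comp
  have : IsFreeGroup F.range := IsFreeGroup.ofMulEquiv (MonoidHom.ofInjective hF)
  refine infinite_quotient_of_le_free hn (K := F.range) ?_
  have hmem (i : Fin 2) : ![A, B] i ∈ F.range :=
    ⟨Monoid.CoprodI.of (i := i) (FreeGroup.of ()), by simp [F]⟩
  rw [Subgroup.closure_le]
  rintro x (rfl | rfl)
  exacts [hmem 0, hmem 1]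
end
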